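/- For every positive integer k, the packing chromatic number of G_k is at least 2k+9; that is, G_k admits no m-packing coloring for any m ≤ 2k+8. -/

import Mathlib

/-- `W` is an `i`-packing in `G`: any two distinct vertices of `W` are at
graph distance greater than `i` in `G`. -/
def IsPacking {V : Type*} (G : SimpleGraph V) (i : ℕ) (W : Set V) : Prop :=
  ∀ u ∈ W, ∀ v ∈ W, u ≠ v → i < G.dist u v

/-- `c` is a `k`-packing coloring of `G`: every color lies in `{1, …, k}` and
for each `i ∈ {1, …, k}` the color class `c⁻¹(i)` is an `i`-packing. -/
def IsPackingColoring {V : Type*} (G : SimpleGraph V) (k : ℕ) (c : V → ℕ) : Prop :=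
  (∀ v, 1 ≤ c v ∧ c v ≤ k) ∧ ∀ i, 1 ≤ i → i ≤ k → IsPacking G i {v | c v = i}

/-- The packing chromatic number: the least `k` admitting a `k`-packing coloring. -/
noncomputable def packingChromaticNumber {V : Type*} (G : SimpleGraph V) : ℕ :=
  sInf {k | ∃ c : V → ℕ, IsPackingColoring G k c}


/-- Edges of `H`; vertices `y1,…,y7` are `0,…,6`, `z1,…,z7` are `7,…,13`,
and `w` is `14`. -/
def Hedges : List (Fin 15 × Fin 15) :=
  [(0,1),(1,2),(2,6),(6,5),(5,4),(4,0),(1,3),(3,5),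
   (7,8),(8,9),(9,13),(13,12),(12,11),(11,7),(8,10),(10,12),
   (3,14),(14,10),(2,7),(4,13)]

/-- The graph `H`. -/
def Hgraph : SimpleGraph (Fin 15) :=
  SimpleGraph.fromRel (fun u v => (u, v) ∈ Hedges)

/-- Glue two disjoint copies of `G` together with five new vertices
`Sum.inr (Sum.inr i)` for `i : Fin 5`: the `i`-th new vertex is adjacent
exactly to `p i` in the first copy and to `q i` in the second copy. -/
def glue {V : Type*} (G : SimpleGraph V) (p q : Fin 5 → V) :
    SimpleGraph (V ⊕ V ⊕ Fin 5) :=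
  SimpleGraph.fromRel (fun u v =>
    match u, v with
    | Sum.inl a, Sum.inl b => G.Adj a b
    | Sum.inr (Sum.inl a), Sum.inr (Sum.inl b) => G.Adj a b
    | Sum.inr (Sum.inr i), Sum.inl a => a = p i
    | Sum.inr (Sum.inr i), Sum.inr (Sum.inl b) => b = q i
    | _, _ => False)

/-- Attachment points of `a,b,c,d,x` in the first copy (`H'`):
`a ↦ y5`, `b ↦ z7`, `c ↦ y3`, `d ↦ z1`, `x ↦ w`. -/
def pH : Fin 5 → Fin 15 := ![4, 13, 2, 7, 14]

/-- Attachment points of `a,b,c,d,x` in the second copy (`H''`):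
`a ↦ y1`, `b ↦ z3`, `c ↦ z5`, `d ↦ y7`, `x ↦ w`. -/
def qH : Fin 5 → Fin 15 := ![0, 9, 11, 6, 14]

/-- The graph `G₀`: two disjoint copies of `H` plus the five vertices
`a,b,c,d,x`, which are `Sum.inr (Sum.inr 0), …, Sum.inr (Sum.inr 4)`. -/
def G₀ : SimpleGraph (Fin 15 ⊕ Fin 15 ⊕ Fin 5) := glue Hgraph pH qH

/-- The vertex type of `G_k`. -/
def Vt : ℕ → Type
  | 0 => Fin 15 ⊕ Fin 15 ⊕ Fin 5
  | k + 1 => Vt k ⊕ Vt k ⊕ Fin 5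

/-- The five distinguished vertices `a,b,c,d,x` of `G_k`. -/
def distV : (k : ℕ) → Fin 5 → Vt k
  | 0, i => Sum.inr (Sum.inr i)
  | _ + 1, i => Sum.inr (Sum.inr i)

/-- The graph `G_k`: for `k ≥ 1` it is obtained from two disjoint copies of
`G_{k-1}` by adding five new vertices, the `i`-th of which is adjacent exactly
to the `i`-th distinguished vertex of each of the two copies. -/
def Gk : (k : ℕ) → SimpleGraph (Vt k)
  | 0 => G₀
  | k + 1 => glue (Gk k) (distV k) (distV k)

/-!
In a graph of diameter at most `d`, a packing colouring uses each colour `≥ d` at most once. So if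
every packing colouring of `G` has at least four vertices of colour `≥ d`, then each of the two
copies of `G` inside a glued graph has at least two vertices of colour `≥ d + 2`, which makes four
again. If moreover the glued graph has diameter at most `d + 2`, this can be iterated. It starts at
`H` with `d = 4`, where an exhaustive search finds that at most eleven of the fifteen vertices can
have a colour `≤ 3`. It reaches `G_k` with `d = 2 * k + 6`, where the colours of the four vertices
are distinct, so that one of them is at least `2 * k + 9`.

The bounds on the diameters come from a stronger property, which does survive gluing when `d` is
replaced by `d + 2`: any two vertices are joined by a route of length at most `d` through a common
distinguished vertex.
-/

section Distance

variable {V W : Type*} {G : SimpleGraph V} {G' : SimpleGraph W}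

theorem exists_walk_length_le_of_descent (φ : V → ℕ) {v : V}
    (hφ : ∀ u ≠ v, ∃ w, G.Adj u w ∧ φ w < φ u) (u : V) : ∃ p : G.Walk u v, p.length ≤ φ u := by
  induction hn : φ u using Nat.strong_induction_on generalizing u with
  | _ n ih =>
    obtain rfl | huv := eq_or_ne u v
    · exact ⟨.nil, Nat.zero_le _⟩
    · obtain ⟨w, huw, hlt⟩ := hφ u huv
      obtain ⟨p, hp⟩ := ih (φ w) (hn ▸ hlt) w rfl
      exact ⟨.cons huw p, by rw [SimpleGraph.Walk.length_cons]; omega⟩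

theorem dist_hom_le (hG : G.Connected) (f : G →g G') (u v : V) :
    G'.dist (f u) (f v) ≤ G.dist u v := by
  obtain ⟨p, hp⟩ := hG.exists_walk_length_eq_dist u v
  rw [← hp, ← p.length_map f]
  exact SimpleGraph.dist_le _

theorem dist_hom_le_of_adj (hG : G.Connected) (f : G →g G') {x : V} {y : W}
    (hxy : G'.Adj (f x) y) (v : V) : G'.dist (f v) y ≤ G.dist v x + 1 := by
  have htri := hxy.reachable.dist_triangle_right (f v)
  rw [SimpleGraph.dist_eq_one_iff_adj.2 hxy] at htri
  exact htri.trans (Nat.add_le_add_right (dist_hom_le hG f v x) 1)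

/-- Any two vertices `u`, `v` are within total distance `n` of `r i`, `s i` for a common index `i`.
The maps `r` and `s` stand for attachment maps of a gluing: once `r i` and `s i` have a common new
neighbour for each `i`, the route from `u` to `v` through it has length at most `n + 2`. -/
def PairsMeetWithin {ι : Type*} (G : SimpleGraph V) (n : ℕ) (r s : ι → V) : Prop :=
  ∀ u v, ∃ i, G.dist u (r i) + G.dist v (s i) ≤ n

namespace PairsMeetWithin

variable {ι : Type*} {n : ℕ} {r s : ι → V}

theorem symm (h : PairsMeetWithin G n r s) : PairsMeetWithin G n s r := fun u v =>
  (h v u).imp fun _ hi => (Nat.add_comm _ _).trans_le hi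

theorem dist_le (hG : G.Connected) (h : PairsMeetWithin G n r r) (u v : V) : G.dist u v ≤ n := by
  obtain ⟨i, hi⟩ := h u v
  calc G.dist u v ≤ G.dist u (r i) + G.dist (r i) v := hG.dist_triangle
    _ = G.dist u (r i) + G.dist v (r i) := by rw [G.dist_comm (u := r i)]
    _ ≤ n := hi

end PairsMeetWithin

end Distance

namespace IsPackingColoring

variable {V W : Type*} {G : SimpleGraph V} {G' : SimpleGraph W} {m d : ℕ} {c : V → ℕ}

theorem lt_dist (hc : IsPackingColoring G m c) {u v : V} (huv : u ≠ v) (hcuv : c u = c v) :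
    c u < G.dist u v :=
  hc.2 (c u) (hc.1 u).1 (hc.1 u).2 u rfl v hcuv.symm huv

theorem comp_hom (hG : G.Connected) (f : G →g G') (hf : Function.Injective f) {c : W → ℕ}
    (hc : IsPackingColoring G' m c) : IsPackingColoring G m (c ∘ f) := by
  refine ⟨fun v => hc.1 (f v), fun i hi him u hu v hv huv => ?_⟩
  exact (hc.2 i hi him (f u) hu (f v) hv (hf.ne huv)).trans_le (dist_hom_le hG f u v)

theorem injOn_of_dist_le (hc : IsPackingColoring G m c) (hd : ∀ u v, G.dist u v ≤ d) :
    Set.InjOn c {v | d ≤ c v} := by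
  intro u hu v _ hcuv
  by_contra huv
  exact absurd (hc.lt_dist huv hcuv) (((hd u v).trans hu).not_gt)

theorem ncard_le_ncard_add [Finite V] (hc : IsPackingColoring G m c)
    (hd : ∀ u v, G.dist u v ≤ d) (j : ℕ) :
    {v | d ≤ c v}.ncard ≤ {v | d + j ≤ c v}.ncard + j := by
  have hsplit : {v | d ≤ c v} ⊆ {v | d + j ≤ c v} ∪ {v | d ≤ c v ∧ c v < d + j} := by
    intro v hv
    exact (le_or_gt (d + j) (c v)).imp id fun hlt => ⟨hv, hlt⟩
  have hmiddle : {v | d ≤ c v ∧ c v < d + j}.ncard ≤ (Set.Ico d (d + j)).ncard :=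
    Set.ncard_le_ncard_of_injOn c (fun _ hv => hv)
      ((hc.injOn_of_dist_le hd).mono fun _ hv => hv.1)
  have hIco : (Set.Ico d (d + j)).ncard = j := by
    rw [← Finset.coe_Ico, Set.ncard_coe_finset, Nat.card_Ico, Nat.add_sub_cancel_left]
  have hle := (Set.ncard_le_ncard hsplit).trans (Set.ncard_union_le _ _)
  omega

end IsPackingColoring

section Glue

variable {V : Type*} {G : SimpleGraph V} {p q : Fin 5 → V} {m d n : ℕ}

/-- The inclusion of the first copy of `G` into the glued graph. -/
def glueLeft (G : SimpleGraph V) (p q : Fin 5 → V) : G →g glue G p q where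
  toFun := Sum.inl
  map_rel' h := ⟨Sum.inl_injective.ne h.ne, Or.inl h⟩

/-- The inclusion of the second copy of `G` into the glued graph. -/
def glueRight (G : SimpleGraph V) (p q : Fin 5 → V) : G →g glue G p q where
  toFun := Sum.inr ∘ Sum.inl
  map_rel' h := ⟨(Sum.inr_injective.comp Sum.inl_injective).ne h.ne, Or.inl h⟩

theorem glue_adj_left (G : SimpleGraph V) (p q : Fin 5 → V) (i : Fin 5) :
    (glue G p q).Adj (glueLeft G p q (p i)) (Sum.inr (Sum.inr i)) :=
  ⟨Sum.inl_ne_inr, Or.inr rfl⟩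

theorem glue_adj_right (G : SimpleGraph V) (p q : Fin 5 → V) (i : Fin 5) :
    (glue G p q).Adj (glueRight G p q (q i)) (Sum.inr (Sum.inr i)) :=
  ⟨Sum.inr_injective.ne Sum.inl_ne_inr, Or.inr rfl⟩

theorem glue_connected (hG : G.Connected) (p q : Fin 5 → V) : (glue G p q).Connected := by
  refine SimpleGraph.connected_iff_exists_forall_reachable _ |>.2 ⟨Sum.inr (Sum.inr 0), fun x => ?_⟩
  have hleft (v : V) : (glue G p q).Reachable (Sum.inr (Sum.inr 0)) (Sum.inl v) :=
    (glue_adj_left G p q 0).reachable.symm.trans ((hG (p 0) v).map (glueLeft G p q))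
  rcases x with v | v | i
  · exact hleft v
  · exact (glue_adj_right G p q 0).reachable.symm.trans ((hG (q 0) v).map (glueRight G p q))
  · exact (hleft (p i)).trans (glue_adj_left G p q i).reachable

theorem dist_glue_left_le (hG : G.Connected) (v : V) (i : Fin 5) :
    (glue G p q).dist (Sum.inl v) (Sum.inr (Sum.inr i)) ≤ G.dist v (p i) + 1 :=
  dist_hom_le_of_adj hG (glueLeft G p q) (glue_adj_left G p q i) v

theorem dist_glue_right_le (hG : G.Connected) (v : V) (i : Fin 5) :
    (glue G p q).dist (Sum.inr (Sum.inl v)) (Sum.inr (Sum.inr i)) ≤ G.dist v (q i) + 1 :=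
  dist_hom_le_of_adj hG (glueRight G p q) (glue_adj_right G p q i) v

theorem dist_glue_new_le (hG : G.Connected) (i j : Fin 5) :
    (glue G p q).dist (Sum.inr (Sum.inr i)) (Sum.inr (Sum.inr j)) ≤ G.dist (p i) (p j) + 2 := by
  have hadj := (glue_adj_left G p q i).symm
  have htri := hadj.reachable.dist_triangle_left (Sum.inr (Sum.inr j))
  rw [SimpleGraph.dist_eq_one_iff_adj.2 hadj] at htri
  have hle : (glue G p q).dist (glueLeft G p q (p i)) _ ≤ _ := dist_glue_left_le hG (p i) j
  omega

theorem dist_glue_to_new_le (hG : G.Connected) (hdist : ∀ u v, G.dist u v ≤ n)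
    (x : V ⊕ V ⊕ Fin 5) (i : Fin 5) : (glue G p q).dist x (Sum.inr (Sum.inr i)) ≤ n + 2 := by
  rcases x with v | v | j
  · have := dist_glue_left_le (p := p) (q := q) hG v i
    have := hdist v (p i)
    omega
  · have := dist_glue_right_le (p := p) (q := q) hG v i
    have := hdist v (q i)
    omega
  · have := dist_glue_new_le (p := p) (q := q) hG j i
    have := hdist (p j) (p i)
    omega

theorem PairsMeetWithin.glue (hG : G.Connected) (hpp : PairsMeetWithin G n p p)
    (hpq : PairsMeetWithin G n p q) (hqq : PairsMeetWithin G n q q) :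
    PairsMeetWithin (glue G p q) (n + 2) (Sum.inr ∘ Sum.inr) (Sum.inr ∘ Sum.inr) := by
  have hnew := dist_glue_to_new_le (p := p) (q := q) hG (hpp.dist_le hG)
  have hleft := dist_glue_left_le (p := p) (q := q) hG
  have hright := dist_glue_right_le (p := p) (q := q) hG
  have combine {a b a' b' : ℕ} (ha : a ≤ a' + 1) (hb : b ≤ b' + 1) (h : a' + b' ≤ n) :
      a + b ≤ n + 2 := by omega
  rintro (u | u | i) (v | v | j)
  · exact (hpp u v).imp fun i => combine (hleft u i) (hleft v i)
  · exact (hpq u v).imp fun i => combine (hleft u i) (hright v i)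
  · exact ⟨j, by simpa using hnew _ j⟩
  · exact (hpq.symm u v).imp fun i => combine (hright u i) (hleft v i)
  · exact (hqq u v).imp fun i => combine (hright u i) (hright v i)
  · exact ⟨j, by simpa using hnew _ j⟩
  all_goals exact ⟨i, by simpa using hnew _ i⟩

theorem ncard_add_ncard_le_ncard_sum {W α : Type*} [Finite V] [Finite W] [Finite α]
    (P : V ⊕ W ⊕ α → Prop) :
    {v | P (Sum.inl v)}.ncard + {w | P (Sum.inr (Sum.inl w))}.ncard ≤ {x | P x}.ncard := by
  have hinr : Function.Injective fun w : W => (Sum.inr (Sum.inl w) : V ⊕ W ⊕ α) :=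
    Sum.inr_injective.comp Sum.inl_injective
  rw [← Set.ncard_image_of_injective _ (Sum.inl_injective (β := W ⊕ α)),
    ← Set.ncard_image_of_injective _ hinr, ← Set.ncard_union_eq]
  · refine Set.ncard_le_ncard (Set.union_subset ?_ ?_) <;> exact Set.image_subset_iff.2 fun _ h => h
  · rw [Set.disjoint_left]
    rintro _ ⟨v, -, rfl⟩ ⟨w, -, hw⟩
    exact Sum.inr_ne_inl hw

theorem two_mul_le_ncard_glue [Finite V] (hG : G.Connected) (hd : ∀ u v, G.dist u v ≤ d) {a : ℕ}
    (ha : ∀ c, IsPackingColoring G m c → a ≤ {v | d ≤ c v}.ncard) {c : V ⊕ V ⊕ Fin 5 → ℕ}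
    (hc : IsPackingColoring (glue G p q) m c) (j : ℕ) :
    2 * a ≤ {x | d + j ≤ c x}.ncard + 2 * j := by
  have hcl := hc.comp_hom hG (glueLeft G p q) Sum.inl_injective
  have hcr := hc.comp_hom hG (glueRight G p q) (Sum.inr_injective.comp Sum.inl_injective)
  have hleft := (ha _ hcl).trans (hcl.ncard_le_ncard_add hd j)
  have hright := (ha _ hcr).trans (hcr.ncard_le_ncard_add hd j)
  have hsum := ncard_add_ncard_le_ncard_sum fun x => d + j ≤ c x
  change _ ≤ {v | d + j ≤ c (Sum.inl v)}.ncard + j at hleft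
  change _ ≤ {v | d + j ≤ c (Sum.inr (Sum.inl v))}.ncard + j at hright
  omega

end Glue

section BranchAndBound

variable {V : Type*} {G : SimpleGraph V} {m t : ℕ} {c : V → ℕ}

/-- Branch-and-bound search over the colours of the vertices in the list. The value `true` certifies
that a packing colouring extending the partial colouring `σ` gives at least `b` of them a colour
greater than `t`. Here `σ` lists the vertices already coloured at most `t`, with their colours, and
`δ` is an upper bound for the distance. -/
def forcesAbove (δ : V → V → ℕ) (t : ℕ) : List V → List (V × ℕ) → ℕ → Bool
  | _, _, 0 => true
  | [], _, _ + 1 => false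
  | v :: vs, σ, b + 1 =>
    forcesAbove δ t vs σ b && (List.range' 1 t).all fun i =>
      (σ.any fun x => x.2 == i && decide (δ v x.1 ≤ i)) || forcesAbove δ t vs ((v, i) :: σ) (b + 1)

theorem IsPackingColoring.le_countP_of_forcesAbove (hc : IsPackingColoring G m c)
    {δ : V → V → ℕ} (hδ : ∀ u v, G.dist u v ≤ δ u v) {vs : List V} (hvs : vs.Nodup)
    {σ : List (V × ℕ)} (hσ : ∀ x ∈ σ, c x.1 = x.2 ∧ x.1 ∉ vs) {b : ℕ}
    (h : forcesAbove δ t vs σ b) : b ≤ vs.countP (t < c ·) := by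
  induction vs generalizing σ b with
  | nil => cases b with
    | zero => exact Nat.zero_le _
    | succ b => simp [forcesAbove] at h
  | cons v vs ih =>
    obtain _ | b := b
    · exact Nat.zero_le _
    obtain ⟨hv, hvs⟩ := List.nodup_cons.1 hvs
    have hσ' : ∀ x ∈ σ, c x.1 = x.2 ∧ x.1 ∉ vs := fun x hx =>
      ⟨(hσ x hx).1, fun hmem => (hσ x hx).2 (List.mem_cons_of_mem v hmem)⟩
    rw [forcesAbove, Bool.and_eq_true, List.all_eq_true] at h
    rw [List.countP_cons]
    by_cases hvt : t < c v
    · simpa [hvt] using ih hvs hσ' h.1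
    have hrange : c v ∈ List.range' 1 t := List.mem_range'_1.2 ⟨(hc.1 v).1, by omega⟩
    obtain hclash | hext := Bool.or_eq_true_iff.1 (h.2 (c v) hrange)
    · obtain ⟨x, hx, hxv⟩ := List.any_eq_true.1 hclash
      obtain ⟨hxc, hxd⟩ : x.2 = c v ∧ δ v x.1 ≤ c v := by simpa using hxv
      have hne : v ≠ x.1 := fun he => (hσ x hx).2 (he ▸ List.mem_cons_self)
      have hlt := hc.lt_dist hne (((hσ x hx).1.trans hxc).symm)
      exact absurd (hlt.trans_le ((hδ v x.1).trans hxd)) (lt_irrefl _)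
    · have hσv : ∀ x ∈ (v, c v) :: σ, c x.1 = x.2 ∧ x.1 ∉ vs :=
        List.forall_mem_cons.2 ⟨⟨rfl, hv⟩, hσ'⟩
      exact (ih hvs hσv hext).trans (Nat.le_add_right _ _)

end BranchAndBound

section BaseGraph

instance : DecidableRel Hgraph.Adj :=
  inferInstanceAs (DecidableRel (SimpleGraph.fromRel fun u v => (u, v) ∈ Hedges).Adj)

/-- The distances in `H`. -/
def Hdist : Fin 15 → Fin 15 → ℕ :=
  ![![0, 1, 2, 2, 1, 2, 3, 3, 4, 3, 4, 4, 3, 2, 3],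
    ![1, 0, 1, 1, 2, 2, 2, 2, 3, 4, 3, 3, 4, 3, 2],
    ![2, 1, 0, 2, 3, 2, 1, 1, 2, 3, 3, 2, 3, 4, 3],
    ![2, 1, 2, 0, 2, 1, 2, 3, 3, 4, 2, 4, 3, 3, 1],
    ![1, 2, 3, 2, 0, 1, 2, 4, 3, 2, 3, 3, 2, 1, 3],
    ![2, 2, 2, 1, 1, 0, 1, 3, 4, 3, 3, 4, 3, 2, 2],
    ![3, 2, 1, 2, 2, 1, 0, 2, 3, 4, 4, 3, 4, 3, 3],
    ![3, 2, 1, 3, 4, 3, 2, 0, 1, 2, 2, 1, 2, 3, 3],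
    ![4, 3, 2, 3, 3, 4, 3, 1, 0, 1, 1, 2, 2, 2, 2],
    ![3, 4, 3, 4, 2, 3, 4, 2, 1, 0, 2, 3, 2, 1, 3],
    ![4, 3, 3, 2, 3, 3, 4, 2, 1, 2, 0, 2, 1, 2, 1],
    ![4, 3, 2, 4, 3, 4, 3, 1, 2, 3, 2, 0, 1, 2, 3],
    ![3, 4, 3, 3, 2, 3, 4, 2, 2, 2, 1, 1, 0, 1, 2],
    ![2, 3, 4, 3, 1, 2, 3, 3, 2, 1, 2, 2, 1, 0, 3],
    ![3, 2, 3, 1, 3, 2, 3, 3, 2, 3, 1, 3, 2, 3, 0]]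

theorem exists_adj_Hdist_lt :
    ∀ v u : Fin 15, u ≠ v → ∃ w, Hgraph.Adj u w ∧ Hdist w v < Hdist u v := by
  decide +kernel

theorem exists_walk_length_le_Hdist (u v : Fin 15) :
    ∃ p : Hgraph.Walk u v, p.length ≤ Hdist u v :=
  exists_walk_length_le_of_descent (Hdist · v) (exists_adj_Hdist_lt v) u

theorem Hgraph_connected : Hgraph.Connected :=
  .mk fun u v => (exists_walk_length_le_Hdist u v).choose.reachable

theorem Hgraph_dist_le (u v : Fin 15) : Hgraph.dist u v ≤ Hdist u v :=
  let ⟨p, hp⟩ := exists_walk_length_le_Hdist u v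
  (SimpleGraph.dist_le p).trans hp

theorem Hgraph_pairsMeetWithin_of_Hdist {r s : Fin 5 → Fin 15}
    (h : ∀ u v, ∃ i, Hdist u (r i) + Hdist v (s i) ≤ 4) : PairsMeetWithin Hgraph 4 r s :=
  fun u v => (h u v).imp fun i =>
    (Nat.add_le_add (Hgraph_dist_le u (r i)) (Hgraph_dist_le v (s i))).trans

theorem Hgraph_pairsMeetWithin_pH_pH : PairsMeetWithin Hgraph 4 pH pH :=
  Hgraph_pairsMeetWithin_of_Hdist (by decide +kernel)

theorem Hgraph_pairsMeetWithin_pH_qH : PairsMeetWithin Hgraph 4 pH qH :=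
  Hgraph_pairsMeetWithin_of_Hdist (by decide +kernel)

theorem Hgraph_pairsMeetWithin_qH_qH : PairsMeetWithin Hgraph 4 qH qH :=
  Hgraph_pairsMeetWithin_of_Hdist (by decide +kernel)

theorem forcesAbove_Hdist : forcesAbove Hdist 3 (List.finRange 15) [] 4 := by decide +kernel

theorem four_le_ncard_Hgraph {m : ℕ} {c : Fin 15 → ℕ} (hc : IsPackingColoring Hgraph m c) :
    4 ≤ {v | 4 ≤ c v}.ncard := by
  have hcount := hc.le_countP_of_forcesAbove Hgraph_dist_le (List.nodup_finRange 15) (by simp)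
    forcesAbove_Hdist
  have hset : {v | 4 ≤ c v} = ((List.finRange 15).filter (3 < c ·)).toFinset := by
    ext v
    simp [Nat.succ_le_iff]
  rwa [hset, Set.ncard_coe_finset,
    List.toFinset_card_of_nodup ((List.nodup_finRange 15).filter _), ← List.countP_eq_length_filter]

end BaseGraph

section IteratedGraph

instance finite_Vt : ∀ k, Finite (Vt k)
  | 0 => inferInstanceAs (Finite (Fin 15 ⊕ Fin 15 ⊕ Fin 5))
  | k + 1 =>
    have := finite_Vt k
    inferInstanceAs (Finite (Vt k ⊕ Vt k ⊕ Fin 5))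

theorem Gk_connected : ∀ k, (Gk k).Connected
  | 0 => glue_connected Hgraph_connected pH qH
  | k + 1 => glue_connected (Gk_connected k) (distV k) (distV k)

theorem Gk_pairsMeetWithin : ∀ k, PairsMeetWithin (Gk k) (2 * k + 6) (distV k) (distV k)
  | 0 => .glue Hgraph_connected Hgraph_pairsMeetWithin_pH_pH Hgraph_pairsMeetWithin_pH_qH
      Hgraph_pairsMeetWithin_qH_qH
  | k + 1 =>
    have ih := Gk_pairsMeetWithin k
    .glue (Gk_connected k) ih ih ih

theorem Gk_dist_le (k : ℕ) : ∀ u v, (Gk k).dist u v ≤ 2 * k + 6 :=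
  (Gk_pairsMeetWithin k).dist_le (Gk_connected k)

theorem four_le_ncard_Gk {k m : ℕ} {c : Vt k → ℕ} (hc : IsPackingColoring (Gk k) m c) :
    4 ≤ {v | 2 * k + 6 ≤ c v}.ncard := by
  induction k with
  | zero =>
    have hH := Hgraph_pairsMeetWithin_pH_pH.dist_le Hgraph_connected
    exact Nat.le_of_add_le_add_right (b := 4)
      (two_mul_le_ncard_glue Hgraph_connected hH (fun _ => four_le_ncard_Hgraph) hc 2)
  | succ k ih =>
    exact Nat.le_of_add_le_add_right (b := 4)
      (two_mul_le_ncard_glue (Gk_connected k) (Gk_dist_le k) (fun _ => ih) hc 2)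

theorem Gk_not_isPackingColoring {k m : ℕ} (hm : m ≤ 2 * k + 8) (c : Vt k → ℕ) :
    ¬ IsPackingColoring (Gk k) m c := by
  intro hc
  have hfour := (four_le_ncard_Gk hc).trans (hc.ncard_le_ncard_add (Gk_dist_le k) 3)
  have hempty : {v | 2 * k + 6 + 3 ≤ c v} = ∅ :=
    Set.eq_empty_of_forall_notMem fun v hv => by
      have := (hc.1 v).2.trans hm
      exact absurd (hv.trans this) (by omega)
  rw [hempty, Set.ncard_empty] at hfour
  omega

end IteratedGraph

section PackingChromaticNumber

variable {V : Type*} [Finite V]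

theorem exists_isPackingColoring (G : SimpleGraph V) :
    ∃ m, ∃ c : V → ℕ, IsPackingColoring G m c := by
  obtain ⟨n, ⟨e⟩⟩ := Finite.exists_equiv_fin V
  refine ⟨n, fun v => e v + 1, fun v => ⟨Nat.le_add_left _ _, (e v).2⟩, ?_⟩
  intro i _ _ u hu v hv huv
  exact absurd (e.injective (Fin.ext (Nat.succ_injective (hu.trans hv.symm)))) huv

theorem lt_packingChromaticNumber {G : SimpleGraph V} {n : ℕ}
    (h : ∀ m ≤ n, ¬ ∃ c : V → ℕ, IsPackingColoring G m c) : n < packingChromaticNumber G := by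
  by_contra hle
  exact h _ (not_lt.1 hle) (Nat.sInf_mem (exists_isPackingColoring G))

end PackingChromaticNumber

/-- For every positive integer `k`, the packing chromatic number of `G_k` is at
least `2k + 9`; that is, `G_k` admits no `m`-packing coloring for any
`m ≤ 2k + 8`. -/
theorem stmt14 (k : ℕ) (hk : 1 ≤ k) :
    2 * k + 9 ≤ packingChromaticNumber (Gk k) ∧
    ∀ m ≤ 2 * k + 8, ¬ ∃ c : Vt k → ℕ, IsPackingColoring (Gk k) m c := by
  have hno : ∀ m ≤ 2 * k + 8, ¬ ∃ c : Vt k → ℕ, IsPackingColoring (Gk k) m c :=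
    fun _ hm ⟨c, hc⟩ => Gk_not_isPackingColoring hm c hc
  exact ⟨lt_packingChromaticNumber hno, hno⟩
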